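/- In a golden history, reciprocity of force carriers holds for groups: if at time t₁ the force carrier c belongs to the extended force set φ*_{t₁}(X, a, Y) = ⋃_{x ∈ X, y ∈ Y} φ_{t₁}(x, a, y) that the group X ⊆ P directs at the group Y ⊆ P over good a, then there exists a later time t₂ > t₁ at which c belongs to the extended force set φ*_{t₂}(Y, a, X) = ⋃_{y ∈ Y, x ∈ X} φ_{t₂}(y, a, x) that the group Y directs at the group X over the same good a. (Theorem 2, the law of reciprocity for groups.) -/

import Mathlib

/-- A golden social state over persons `P`, goods `E`, force carriers `C`,
with maximum idle periods `θ`.  It consists of a golden power function `pow`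
(whose values partition `C`), an idle function `idle` bounded by `θ`, and a
golden force function `force` with `force x a y ⊆ pow x a y`, such that any
carrier whose idle counter has reached its maximum must be exercised. -/
structure GoldenState (P E C : Type*) (θ : C → ℕ) where
  pow : P → E → P → Set C
  idle : C → ℕ
  force : P → E → P → Set C
  pow_disjoint : ∀ x₁ a₁ y₁ x₂ a₂ y₂, (x₁, a₁, y₁) ≠ (x₂, a₂, y₂) →
    Disjoint (pow x₁ a₁ y₁) (pow x₂ a₂ y₂)
  pow_union : (⋃ x, ⋃ a, ⋃ y, pow x a y) = Set.univ
  idle_le : ∀ c, idle c ≤ θ c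
  force_sub : ∀ x a y, force x a y ⊆ pow x a y
  force_of_max : ∀ c x a y, idle c = θ c → c ∈ pow x a y → c ∈ force x a y

/-- The successor relation on golden social states: exercised carriers are
transferred to the reciprocal triple and their idle counters are reset;
unexercised carriers stay put and their idle counters increase. -/
def Successor {P E C : Type*} {θ : C → ℕ} (σ σ' : GoldenState P E C θ) : Prop :=
  (∀ x a y, σ'.pow x a y = (σ.pow x a y \ σ.force x a y) ∪ σ.force y a x) ∧
  (∀ c x a y, c ∈ σ.pow x a y →
    (c ∈ σ.force x a y → σ'.idle c = 0) ∧
    (c ∉ σ.force x a y → σ'.idle c = σ.idle c + 1))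

/-- A golden history: an infinite sequence of golden social states, each a
successor of the previous one. -/
def GoldenHistory {P E C : Type*} {θ : C → ℕ} (σ : ℕ → GoldenState P E C θ) : Prop :=
  ∀ t, Successor (σ t) (σ (t + 1))
/-- The extended golden force function: the union of the force sets directed
by members of `X` at members of `Y` over good `a`. -/
def extForce {P E C : Type*} {θ : C → ℕ} (σ : GoldenState P E C θ)
    (X : Set P) (a : E) (Y : Set P) : Set C :=
  ⋃ x ∈ X, ⋃ y ∈ Y, σ.force x a y

/-!
A carrier that is never exercised stays with its triple while its idle counter grows by one at each
step, which cannot go on beyond `θ c`; so every triple that holds a carrier eventually exercises it.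
Exercising it hands the carrier over to the reciprocal triple, which must exercise it in turn.
-/

section Reciprocity

variable {P E C : Type*} {θ : C → ℕ} {c : C} {x y : P} {a : E}

theorem mem_extForce {σ : GoldenState P E C θ} {X Y : Set P} :
    c ∈ extForce σ X a Y ↔ ∃ x ∈ X, ∃ y ∈ Y, c ∈ σ.force x a y := by
  simp only [extForce, Set.mem_iUnion, exists_prop]

namespace Successor

variable {σ σ' : GoldenState P E C θ}

theorem mem_pow_swap (hsucc : Successor σ σ') (hforce : c ∈ σ.force x a y) :
    c ∈ σ'.pow y a x := by
  rw [hsucc.1]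
  exact Or.inr hforce

theorem mem_pow_of_notMem_force (hsucc : Successor σ σ') (hpow : c ∈ σ.pow x a y)
    (hforce : c ∉ σ.force x a y) : c ∈ σ'.pow x a y := by
  rw [hsucc.1]
  exact Or.inl ⟨hpow, hforce⟩

theorem idle_eq_add_one (hsucc : Successor σ σ') (hpow : c ∈ σ.pow x a y)
    (hforce : c ∉ σ.force x a y) : σ'.idle c = σ.idle c + 1 :=
  (hsucc.2 c x a y hpow).2 hforce

end Successor

namespace GoldenHistory

variable {σ : ℕ → GoldenState P E C θ} {t : ℕ}

theorem mem_pow_and_idle_eq_add (hist : GoldenHistory σ) (hpow : c ∈ (σ t).pow x a y) {n : ℕ}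
    (hforce : ∀ k < n, c ∉ (σ (t + k)).force x a y) :
    c ∈ (σ (t + n)).pow x a y ∧ (σ (t + n)).idle c = (σ t).idle c + n := by
  induction n with
  | zero => exact ⟨hpow, rfl⟩
  | succ n ih =>
    obtain ⟨hpow_n, hidle_n⟩ := ih fun k hk ↦ hforce k (hk.trans n.lt_succ_self)
    have hforce_n := hforce n n.lt_succ_self
    have hidle_succ := (hist (t + n)).idle_eq_add_one hpow_n hforce_n
    rw [hidle_n] at hidle_succ
    exact ⟨(hist (t + n)).mem_pow_of_notMem_force hpow_n hforce_n, hidle_succ⟩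

theorem exists_mem_force_of_mem_pow (hist : GoldenHistory σ) (hpow : c ∈ (σ t).pow x a y) :
    ∃ s ≥ t, c ∈ (σ s).force x a y := by
  by_contra! hforce
  have hidle : (σ (t + (θ c + 1))).idle c = (σ t).idle c + (θ c + 1) :=
    (hist.mem_pow_and_idle_eq_add hpow fun k _ ↦ hforce (t + k) (Nat.le_add_right t k)).2
  have hidle_le : (σ (t + (θ c + 1))).idle c ≤ θ c := (σ (t + (θ c + 1))).idle_le c
  lia

theorem exists_gt_mem_force_swap (hist : GoldenHistory σ) (hforce : c ∈ (σ t).force x a y) :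
    ∃ s > t, c ∈ (σ s).force y a x :=
  hist.exists_mem_force_of_mem_pow ((hist t).mem_pow_swap hforce)

end GoldenHistory

theorem golden_reciprocity_groups_general {σ : ℕ → GoldenState P E C θ} (hist : GoldenHistory σ)
    {t₁ : ℕ} {X Y : Set P} (h : c ∈ extForce (σ t₁) X a Y) :
    ∃ t₂ > t₁, c ∈ extForce (σ t₂) Y a X := by
  obtain ⟨x, hx, y, hy, hforce⟩ := mem_extForce.1 h
  obtain ⟨t₂, ht, hforce_swap⟩ := hist.exists_gt_mem_force_swap hforce
  exact ⟨t₂, ht, mem_extForce.2 ⟨y, hy, x, hx, hforce_swap⟩⟩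

end Reciprocity

/-- Theorem 2 (law of reciprocity for groups): in a golden history, if at time
`t₁` carrier `c` is in the extended force set that group `X` directs at group
`Y` over good `a`, then at some later time `t₂ > t₁` carrier `c` is in the
extended force set that `Y` directs at `X` over `a`. -/
theorem golden_reciprocity_groups
    {P E C : Type*} [Fintype P] [Nonempty P] [Fintype E] [Nonempty E]
    [Fintype C] [Nonempty C] {θ : C → ℕ} (hθ : ∀ c, 1 ≤ θ c)
    (σ : ℕ → GoldenState P E C θ) (hist : GoldenHistory σ)
    (t₁ : ℕ) (c : C) (X Y : Set P) (a : E) (h : c ∈ extForce (σ t₁) X a Y) :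
    ∃ t₂, t₁ < t₂ ∧ c ∈ extForce (σ t₂) Y a X :=
  golden_reciprocity_groups_general hist h
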